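/- arXiv:2602.05790 — 2 statements merged into one kernel-verified Lean document; each statement's English description precedes it below -/
import Mathlib

section
/- Fix D* ∈ [0.005, 0.995], ε ∈ (0, D*), f_n = (D* − ε)/(2n), and k ∈ {0, 1, …, n}. Let F_k be the set of λ ∈ ℝ₊ⁿ with Σᵢ λᵢ = n such that, writing t = t_wf(λ, D*) (the water level with D_wf(λ, t) = D*), one has λᵢ ≥ t + ε f_n for all i ≤ k and 0 ≤ λᵢ ≤ t − ε f_n for all i > k. If λ* maximizes G(λ) = 𝐑_rc(λ, D*) − 𝐑_wf(λ, D*) over F_k, then λ*_{k+1} = λ*_{k+2} = … = λ*_n. -/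
open Real

/-- Waterfilling distortion `D_wf(λ, t) = (1/n) Σᵢ min{λᵢ, t}`. -/
noncomputable def Dwf {n : ℕ} (lam : Fin n → ℝ) (t : ℝ) : ℝ :=
  (1 / (n : ℝ)) * ∑ i, min (lam i) t

/-- Waterfilling rate `R_wf(λ, t) = (1/(2n)) Σᵢ max{0, log₂(λᵢ/t)}`. -/
noncomputable def Rwf {n : ℕ} (lam : Fin n → ℝ) (t : ℝ) : ℝ :=
  (1 / (2 * (n : ℝ))) * ∑ i, max 0 (Real.logb 2 (lam i / t))

/-- Random-coding distortion `D_rc(λ, T) = (1/n) Σᵢ λᵢ/(1 + λᵢ T)`. -/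
noncomputable def Drc {n : ℕ} (lam : Fin n → ℝ) (T : ℝ) : ℝ :=
  (1 / (n : ℝ)) * ∑ i, lam i / (1 + lam i * T)

/-- Random-coding rate `R_rc(λ, T) = (1/(2n)) Σᵢ log₂(1 + λᵢ T)`. -/
noncomputable def Rrc {n : ℕ} (lam : Fin n → ℝ) (T : ℝ) : ℝ :=
  (1 / (2 * (n : ℝ))) * ∑ i, Real.logb 2 (1 + lam i * T)

/-- `t_wf(λ, D)`: the water level `t > 0` with `D_wf(λ, t) = D`. -/
noncomputable def twfD {n : ℕ} (lam : Fin n → ℝ) (D : ℝ) : ℝ :=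
  Classical.epsilon fun t => 0 < t ∧ Dwf lam t = D

/-- `𝐑_wf(λ, D) = R_wf(λ, t_wf(λ, D))`. -/
noncomputable def RRwf {n : ℕ} (lam : Fin n → ℝ) (D : ℝ) : ℝ :=
  Rwf lam (twfD lam D)

/-- `T > 0` solving `D_rc(λ, T) = D`. -/
noncomputable def TrcD {n : ℕ} (lam : Fin n → ℝ) (D : ℝ) : ℝ :=
  Classical.epsilon fun T => 0 < T ∧ Drc lam T = D

/-- `𝐑_rc(λ, D) = R_rc(λ, T)` where `T > 0` solves `D_rc(λ, T) = D`. -/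
noncomputable def RRrc {n : ℕ} (lam : Fin n → ℝ) (D : ℝ) : ℝ :=
  Rrc lam (TrcD lam D)

/-- The feasible set `F_k`: spectra with trace `n` whose first `k` coordinates are
at least `t_wf(λ, D*) + ε f_n` (active set) and whose remaining coordinates are at
most `t_wf(λ, D*) - ε f_n` (inactive set), with `f_n = (D* - ε)/(2n)`.
(Indices of `Fin n` are 0-based: `i ≤ k` in 1-based notation is `(i : ℕ) < k`.) -/
def Fk (n : ℕ) (k : ℕ) (Dstar ε : ℝ) (lam : Fin n → ℝ) : Prop :=
  (∀ i, 0 ≤ lam i) ∧ (∑ i, lam i) = (n : ℝ) ∧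
  (∀ i : Fin n, (i : ℕ) < k →
    twfD lam Dstar + ε * ((Dstar - ε) / (2 * (n : ℝ))) ≤ lam i) ∧
  (∀ i : Fin n, k ≤ (i : ℕ) →
    lam i ≤ twfD lam Dstar - ε * ((Dstar - ε) / (2 * (n : ℝ))))

/-!
Replace all inactive eigenvalues of a feasible `λ` by their average. All of them lie below the water
level, where `min{·, t}` is the identity and `max{0, log₂(·/t)}` vanishes, so neither the water
level nor `𝐑_wf` changes. On the random-coding side, `D_rc` at a fixed `T` does not decrease,
because `x ↦ x / (1 + xT)` is concave, so meeting the distortion `D*` requires at least as large a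
`T`; and strict concavity of `x ↦ log₂(1 + xT)` makes `R_rc` strictly larger unless the inactive
eigenvalues were already equal.
-/

open Finset
open scoped BigOperators

section Jensen

variable {ι : Type*} {s : Finset ι} {x : ι → ℝ} {C : Set ℝ} {f : ℝ → ℝ}

lemma expect_eq_sum_inv_card_smul (s : Finset ι) (x : ι → ℝ) :
    𝔼 i ∈ s, x i = ∑ i ∈ s, (#s : ℝ)⁻¹ • x i := by
  rw [expect_eq_sum_div_card, ← smul_sum, smul_eq_mul, div_eq_inv_mul]

lemma sum_inv_card_eq_one (hs : s.Nonempty) : ∑ _i ∈ s, (#s : ℝ)⁻¹ = 1 := by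
  rw [sum_const, nsmul_eq_mul, mul_inv_cancel₀ (by exact_mod_cast hs.card_ne_zero)]

lemma expect_le_map_expect_of_concaveOn (hf : ConcaveOn ℝ C f) (hs : s.Nonempty)
    (hx : ∀ i ∈ s, x i ∈ C) : 𝔼 i ∈ s, f (x i) ≤ f (𝔼 i ∈ s, x i) := by
  simp only [expect_eq_sum_inv_card_smul]
  exact hf.le_map_sum (fun _ _ ↦ by positivity) (sum_inv_card_eq_one hs) hx

lemma expect_lt_map_expect_of_strictConcaveOn (hf : StrictConcaveOn ℝ C f)
    (hx : ∀ i ∈ s, x i ∈ C) (hne : ∃ i ∈ s, ∃ j ∈ s, x i ≠ x j) :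
    𝔼 i ∈ s, f (x i) < f (𝔼 i ∈ s, x i) := by
  have hs : s.Nonempty := hne.imp fun _ h ↦ h.1
  simp only [expect_eq_sum_inv_card_smul]
  exact hf.lt_map_sum (fun _ _ ↦ inv_pos.mpr (Nat.cast_pos.mpr hs.card_pos))
    (sum_inv_card_eq_one hs) hx hne

end Jensen

section AverageOn

variable {ι M : Type*} [DecidableEq ι]

/-- The family `x` with its values on `s` replaced by their average over `s`: the conditional
expectation of `x`, for the uniform measure, given the partition into `s` and the singletons
outside `s`. -/
noncomputable def averageOn [AddCommMonoid M] [Module ℚ≥0 M] (s : Finset ι) (x : ι → M) : ι → M :=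
  s.piecewise (fun _ ↦ 𝔼 i ∈ s, x i) x

section Module

variable [AddCommMonoid M] [Module ℚ≥0 M] {s : Finset ι} {i : ι}

lemma averageOn_of_mem (hi : i ∈ s) (x : ι → M) : averageOn s x i = 𝔼 j ∈ s, x j :=
  piecewise_eq_of_mem _ _ _ hi

lemma averageOn_of_notMem (hi : i ∉ s) (x : ι → M) : averageOn s x i = x i :=
  piecewise_eq_of_notMem _ _ _ hi

lemma expect_averageOn [Fintype ι] (s : Finset ι) (x : ι → M) :
    𝔼 i, averageOn s x i = 𝔼 i, x i := by
  rw [expect_univ, expect_univ, ← sum_add_sum_compl s, ← sum_add_sum_compl s x,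
    sum_congr rfl fun i hi ↦ averageOn_of_mem hi x, sum_const, card_smul_expect,
    sum_congr rfl fun i hi ↦ averageOn_of_notMem (mem_compl.mp hi) x]

end Module

variable {s : Finset ι} {x : ι → ℝ} {a : ℝ} {C : Set ℝ} {f : ℝ → ℝ} {i : ι}

lemma averageOn_nonneg (hx : 0 ≤ x) : 0 ≤ averageOn s x := by
  intro i
  by_cases hi : i ∈ s
  · exact (expect_nonneg fun j _ ↦ hx j).trans_eq (averageOn_of_mem hi x).symm
  · exact (hx i).trans_eq (averageOn_of_notMem hi x).symm

lemma averageOn_le_of_mem (hi : i ∈ s) (hx : ∀ j ∈ s, x j ≤ a) : averageOn s x i ≤ a :=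
  (averageOn_of_mem hi x).trans_le (expect_le ⟨i, hi⟩ hx)

lemma min_averageOn (hx : ∀ j ∈ s, x j ≤ a) (i : ι) :
    min (averageOn s x i) a = averageOn s (fun j ↦ min (x j) a) i := by
  by_cases hi : i ∈ s
  · rw [min_eq_left (averageOn_le_of_mem hi hx), averageOn_of_mem hi, averageOn_of_mem hi]
    exact expect_congr rfl fun j hj ↦ (min_eq_left (hx j hj)).symm
  · rw [averageOn_of_notMem hi, averageOn_of_notMem hi]

lemma averageOn_comp_le (hf : ConcaveOn ℝ C f) (hx : ∀ j ∈ s, x j ∈ C) (i : ι) :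
    averageOn s (fun j ↦ f (x j)) i ≤ f (averageOn s x i) := by
  by_cases hi : i ∈ s
  · rw [averageOn_of_mem hi, averageOn_of_mem hi]
    exact expect_le_map_expect_of_concaveOn hf ⟨i, hi⟩ hx
  · rw [averageOn_of_notMem hi, averageOn_of_notMem hi]

lemma averageOn_comp_lt (hf : StrictConcaveOn ℝ C f) (hx : ∀ j ∈ s, x j ∈ C)
    (hne : ∃ j ∈ s, ∃ l ∈ s, x j ≠ x l) (hi : i ∈ s) :
    averageOn s (fun j ↦ f (x j)) i < f (averageOn s x i) := by
  rw [averageOn_of_mem hi, averageOn_of_mem hi]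
  exact expect_lt_map_expect_of_strictConcaveOn hf hx hne

lemma expect_comp_le_expect_comp_averageOn [Fintype ι] (hf : ConcaveOn ℝ C f)
    (hx : ∀ j ∈ s, x j ∈ C) : 𝔼 i, f (x i) ≤ 𝔼 i, f (averageOn s x i) := by
  rw [← expect_averageOn s]
  exact expect_le_expect fun i _ ↦ averageOn_comp_le hf hx i

lemma expect_comp_lt_expect_comp_averageOn [Fintype ι] (hf : StrictConcaveOn ℝ C f)
    (hx : ∀ j ∈ s, x j ∈ C) (hne : ∃ j ∈ s, ∃ l ∈ s, x j ≠ x l) :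
    𝔼 i, f (x i) < 𝔼 i, f (averageOn s x i) := by
  rw [← expect_averageOn s]
  have ⟨i, hi, _⟩ := hne
  exact expect_lt_expect (fun l _ ↦ averageOn_comp_le hf.concaveOn hx l)
    ⟨i, mem_univ i, averageOn_comp_lt hf hx hne hi⟩

end AverageOn

section Concavity

lemma concaveOn_div_one_add_mul {T : ℝ} (hT : 0 ≤ T) :
    ConcaveOn ℝ (Set.Ici 0) fun x : ℝ ↦ x / (1 + x * T) := by
  refine ⟨convex_Ici 0, fun x (hx : 0 ≤ x) y (hy : 0 ≤ y) a b ha hb hab ↦ ?_⟩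
  simp only [smul_eq_mul]
  have gap : (a * x + b * y) / (1 + (a * x + b * y) * T)
      - (a * (x / (1 + x * T)) + b * (y / (1 + y * T)))
      = a * b * T * (x - y) ^ 2
        / ((1 + (a * x + b * y) * T) * (1 + x * T) * (1 + y * T)) := by
    obtain rfl : b = 1 - a := by linarith
    have hxy : 1 + (a * x + (1 - a) * y) * T ≠ 0 := by positivity
    field_simp
    ring
  rw [← sub_nonneg, gap]
  positivity

lemma strictConcaveOn_logb_one_add_mul {b T : ℝ} (hb : 1 < b) (hT : 0 < T) :
    StrictConcaveOn ℝ (Set.Ici 0) fun x : ℝ ↦ logb b (1 + x * T) := by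
  refine ⟨convex_Ici 0, fun x (hx : 0 ≤ x) y (hy : 0 ≤ y) hxy p q hp hq hpq ↦ ?_⟩
  have hne : 1 + x * T ≠ 1 + y * T := by simpa [hT.ne'] using hxy
  have hlog := strictConcaveOn_log_Ioi.2 (Set.mem_Ioi.mpr (by positivity : 0 < 1 + x * T))
    (Set.mem_Ioi.mpr (by positivity : 0 < 1 + y * T)) hne hp hq hpq
  have haffine : p * (1 + x * T) + q * (1 + y * T) = 1 + (p * x + q * y) * T := by
    linear_combination hpq
  simp only [smul_eq_mul, haffine] at hlog ⊢
  calc p * logb b (1 + x * T) + q * logb b (1 + y * T)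
      = (p * log (1 + x * T) + q * log (1 + y * T)) / log b := by simp only [logb]; ring
    _ < logb b (1 + (p * x + q * y) * T) := div_lt_div_of_pos_right hlog (log_pos hb)

end Concavity

section Curves

variable {n : ℕ} {lam : Fin n → ℝ} {D s t T : ℝ}

lemma Dwf_eq_expect (lam : Fin n → ℝ) (t : ℝ) : Dwf lam t = 𝔼 i, min (lam i) t := by
  rw [Dwf, Fintype.expect_eq_sum_div_card, Fintype.card_fin, one_div_mul_eq_div]

lemma Drc_eq_expect (lam : Fin n → ℝ) (T : ℝ) : Drc lam T = 𝔼 i, lam i / (1 + lam i * T) := by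
  rw [Drc, Fintype.expect_eq_sum_div_card, Fintype.card_fin, one_div_mul_eq_div]

lemma Rrc_eq_expect (lam : Fin n → ℝ) (T : ℝ) :
    Rrc lam T = (𝔼 i, logb 2 (1 + lam i * T)) / 2 := by
  rw [Rrc, Fintype.expect_eq_sum_div_card, Fintype.card_fin, one_div_mul_eq_div, div_div, mul_comm]

lemma continuous_Dwf (lam : Fin n → ℝ) : Continuous (Dwf lam) := by
  unfold Dwf
  fun_prop

lemma monotone_Dwf (lam : Fin n → ℝ) : Monotone (Dwf lam) := fun s t hst ↦ by
  simp only [Dwf_eq_expect]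
  exact expect_le_expect fun i _ ↦ min_le_min le_rfl hst

lemma Dwf_zero_nonpos (lam : Fin n → ℝ) : Dwf lam 0 ≤ 0 := by
  rw [Dwf_eq_expect]
  exact (expect_le_expect fun i _ ↦ min_le_right _ _).trans_eq (expect_const_zero univ)

lemma Dwf_of_forall_le (h : ∀ i, lam i ≤ t) : Dwf lam t = 𝔼 i, lam i := by
  rw [Dwf_eq_expect]
  exact expect_congr rfl fun i _ ↦ min_eq_left (h i)

lemma Dwf_lt_Dwf (hs : Dwf lam s < 𝔼 i, lam i) (hst : s < t) : Dwf lam s < Dwf lam t := by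
  obtain ⟨i, hi⟩ : ∃ i, s < lam i := by
    by_contra! h
    exact hs.ne (Dwf_of_forall_le h)
  simp only [Dwf_eq_expect]
  refine expect_lt_expect (fun j _ ↦ min_le_min le_rfl hst.le) ⟨i, mem_univ i, ?_⟩
  exact (min_le_right _ _).trans_lt (lt_min hi hst)

lemma exists_Dwf_eq (hD : 0 < D) (hDlam : D ≤ 𝔼 i, lam i) : ∃ t, 0 < t ∧ Dwf lam t = D := by
  obtain ⟨M, hM⟩ := (Set.finite_range lam).bddAbove
  obtain ⟨t, ht⟩ : D ∈ Set.range (Dwf lam) := mem_range_of_exists_le_of_exists_ge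
    (continuous_Dwf lam) ⟨0, (Dwf_zero_nonpos lam).trans hD.le⟩
    ⟨M, hDlam.trans_eq (Dwf_of_forall_le fun i ↦ hM (Set.mem_range_self i)).symm⟩
  refine ⟨t, ?_, ht⟩
  by_contra! ht0
  exact absurd ((monotone_Dwf lam ht0).trans (Dwf_zero_nonpos lam)) (ht ▸ hD.not_ge)

lemma twfD_spec (hD : 0 < D) (hDlam : D ≤ 𝔼 i, lam i) :
    0 < twfD lam D ∧ Dwf lam (twfD lam D) = D :=
  Classical.epsilon_spec (exists_Dwf_eq hD hDlam)

lemma twfD_eq_of_Dwf_eq (ht : 0 < t) (hDt : Dwf lam t = D) (hDlam : D < 𝔼 i, lam i) :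
    twfD lam D = t := by
  have hD : Dwf lam (twfD lam D) = D :=
    (Classical.epsilon_spec (p := fun t ↦ 0 < t ∧ Dwf lam t = D) ⟨t, ht, hDt⟩).2
  rcases lt_trichotomy (twfD lam D) t with h | h | h
  · exact absurd (Dwf_lt_Dwf (hD.trans_lt hDlam) h) (hD.trans hDt.symm).not_lt
  · exact h
  · exact absurd (Dwf_lt_Dwf (hDt.trans_lt hDlam) h) (hDt.trans hD.symm).not_lt

lemma Drc_zero (lam : Fin n → ℝ) : Drc lam 0 = 𝔼 i, lam i := by
  simp only [Drc_eq_expect, mul_zero, add_zero, div_one]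

lemma continuousOn_Drc (hlam : 0 ≤ lam) : ContinuousOn (Drc lam) (Set.Ici 0) := by
  unfold Drc
  refine continuousOn_const.mul (continuousOn_finsetSum _ fun i _ ↦ ?_)
  refine continuousOn_const.div (by fun_prop) fun T (hT : 0 ≤ T) ↦ ?_
  have := mul_nonneg (hlam i) hT
  positivity

lemma Drc_inv_le (hlam : 0 ≤ lam) (hD : 0 < D) : Drc lam D⁻¹ ≤ D := by
  have hterm : ∀ i, lam i / (1 + lam i * D⁻¹) ≤ D := fun i ↦ by
    have : 0 ≤ lam i := hlam i
    rw [div_le_iff₀ (by positivity), mul_add, mul_left_comm, mul_inv_cancel₀ hD.ne']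
    linarith
  rw [Drc_eq_expect]
  rcases (univ : Finset (Fin n)).eq_empty_or_nonempty with h | h
  · rw [h, expect_empty]
    exact hD.le
  · exact expect_le h fun i _ ↦ hterm i

lemma exists_Drc_eq (hlam : 0 ≤ lam) (hD : 0 < D) (hDlam : D < 𝔼 i, lam i) :
    ∃ T, 0 < T ∧ Drc lam T = D := by
  have hcont := (continuousOn_Drc hlam).mono (Set.Icc_subset_Ici_self : Set.Icc 0 D⁻¹ ⊆ _)
  obtain ⟨T, hT, hDT⟩ := intermediate_value_Icc' (inv_nonneg.mpr hD.le) hcont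
    ⟨Drc_inv_le hlam hD, hDlam.le.trans_eq (Drc_zero lam).symm⟩
  refine ⟨T, hT.1.lt_of_ne ?_, hDT⟩
  rintro rfl
  exact hDlam.ne' ((Drc_zero lam).symm.trans hDT)

lemma TrcD_spec (hlam : 0 ≤ lam) (hD : 0 < D) (hDlam : D < 𝔼 i, lam i) :
    0 < TrcD lam D ∧ Drc lam (TrcD lam D) = D :=
  Classical.epsilon_spec (exists_Drc_eq hlam hD hDlam)

lemma strictAntiOn_Drc (hlam : 0 < lam) : StrictAntiOn (Drc lam) (Set.Ici 0) := by
  intro S (hS : 0 ≤ S) T _ hST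
  obtain ⟨hnonneg, i, hi : 0 < lam i⟩ := Pi.lt_def.mp hlam
  simp only [Drc_eq_expect]
  refine expect_lt_expect (fun j _ ↦ ?_) ⟨i, mem_univ i, ?_⟩
  · have : 0 ≤ lam j := hnonneg j
    gcongr
  · gcongr

lemma le_TrcD_of_le_Drc (hlam : 0 ≤ lam) (hD : 0 < D) (hDlam : D < 𝔼 i, lam i) (hT : 0 ≤ T)
    (hDT : D ≤ Drc lam T) : T ≤ TrcD lam D := by
  obtain ⟨hpos, heq⟩ := TrcD_spec hlam hD hDlam
  have hlam' : 0 < lam := hlam.lt_of_ne <| by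
    rintro rfl
    simp only [Pi.zero_apply, expect_const_zero] at hDlam
    exact hDlam.not_gt hD
  exact ((strictAntiOn_Drc hlam').le_iff_ge hpos.le hT).mp (heq.trans_le hDT)

lemma monotoneOn_Rrc (hlam : 0 ≤ lam) : MonotoneOn (Rrc lam) (Set.Ici 0) := by
  intro S (hS : 0 ≤ S) T _ hST
  simp only [Rrc_eq_expect]
  refine div_le_div_of_nonneg_right (expect_le_expect fun i _ ↦ ?_) zero_le_two
  have : 0 ≤ lam i := hlam i
  exact logb_le_logb_of_le one_lt_two (by positivity) (by gcongr)

end Curves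

section AveragedSpectrum

variable {n : ℕ} {lam : Fin n → ℝ} {s : Finset (Fin n)} {D t T : ℝ}

lemma Dwf_averageOn (hs : ∀ i ∈ s, lam i ≤ t) : Dwf (averageOn s lam) t = Dwf lam t := by
  simp only [Dwf_eq_expect, min_averageOn hs, expect_averageOn]

lemma Rwf_averageOn (hlam : 0 ≤ lam) (hs : ∀ i ∈ s, lam i ≤ t) :
    Rwf (averageOn s lam) t = Rwf lam t := by
  have hzero : ∀ x, 0 ≤ x → x ≤ t → max 0 (logb 2 (x / t)) = 0 := fun x hx hxt ↦
    max_eq_left (logb_nonpos one_lt_two (div_nonneg hx (hx.trans hxt))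
      (div_le_one_of_le₀ hxt (hx.trans hxt)))
  unfold Rwf
  congr 1
  refine sum_congr rfl fun i _ ↦ ?_
  by_cases hi : i ∈ s
  · rw [hzero _ (averageOn_nonneg hlam i) (averageOn_le_of_mem hi hs), hzero _ (hlam i) (hs i hi)]
  · rw [averageOn_of_notMem hi]

lemma twfD_averageOn (hD : 0 < D) (hDlam : D < 𝔼 i, lam i) (hs : ∀ i ∈ s, lam i ≤ twfD lam D) :
    twfD (averageOn s lam) D = twfD lam D := by
  obtain ⟨hpos, heq⟩ := twfD_spec hD hDlam.le
  exact twfD_eq_of_Dwf_eq hpos ((Dwf_averageOn hs).trans heq)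
    (hDlam.trans_eq (expect_averageOn s lam).symm)

lemma RRwf_averageOn (hlam : 0 ≤ lam) (hD : 0 < D) (hDlam : D < 𝔼 i, lam i)
    (hs : ∀ i ∈ s, lam i ≤ twfD lam D) : RRwf (averageOn s lam) D = RRwf lam D := by
  rw [RRwf, RRwf, twfD_averageOn hD hDlam hs, Rwf_averageOn hlam hs]

lemma Drc_le_Drc_averageOn (hlam : 0 ≤ lam) (hT : 0 ≤ T) :
    Drc lam T ≤ Drc (averageOn s lam) T := by
  simp only [Drc_eq_expect]
  exact expect_comp_le_expect_comp_averageOn (concaveOn_div_one_add_mul hT) fun i _ ↦ hlam i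

lemma Rrc_lt_Rrc_averageOn (hlam : 0 ≤ lam) (hT : 0 < T)
    (hne : ∃ i ∈ s, ∃ j ∈ s, lam i ≠ lam j) : Rrc lam T < Rrc (averageOn s lam) T := by
  simp only [Rrc_eq_expect]
  exact div_lt_div_of_pos_right (expect_comp_lt_expect_comp_averageOn
    (strictConcaveOn_logb_one_add_mul one_lt_two hT) (fun i _ ↦ hlam i) hne) zero_lt_two

lemma TrcD_le_TrcD_averageOn (hlam : 0 ≤ lam) (hD : 0 < D) (hDlam : D < 𝔼 i, lam i) :
    TrcD lam D ≤ TrcD (averageOn s lam) D := by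
  obtain ⟨hpos, heq⟩ := TrcD_spec hlam hD hDlam
  exact le_TrcD_of_le_Drc (averageOn_nonneg hlam) hD
    (hDlam.trans_eq (expect_averageOn s lam).symm) hpos.le
    (heq.symm.trans_le (Drc_le_Drc_averageOn hlam hpos.le))

lemma RRrc_lt_RRrc_averageOn (hlam : 0 ≤ lam) (hD : 0 < D) (hDlam : D < 𝔼 i, lam i)
    (hne : ∃ i ∈ s, ∃ j ∈ s, lam i ≠ lam j) : RRrc lam D < RRrc (averageOn s lam) D := by
  have hpos : 0 < TrcD lam D := (TrcD_spec hlam hD hDlam).1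
  have hle : TrcD lam D ≤ TrcD (averageOn s lam) D := TrcD_le_TrcD_averageOn hlam hD hDlam
  calc Rrc lam (TrcD lam D)
      < Rrc (averageOn s lam) (TrcD lam D) := Rrc_lt_Rrc_averageOn hlam hpos hne
    _ ≤ Rrc (averageOn s lam) (TrcD (averageOn s lam) D) :=
        monotoneOn_Rrc (averageOn_nonneg hlam) hpos.le (hpos.le.trans hle) hle

end AveragedSpectrum

section Feasible

variable {n k : ℕ} {D ε : ℝ} {lam : Fin n → ℝ}

/-- The inactive indices of the feasible set `F_k`, those `i` with `i > k` in the paper's 1-based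
numbering. -/
def inactiveSet (n k : ℕ) : Finset (Fin n) := {i | k ≤ (i : ℕ)}

lemma mem_inactiveSet {i : Fin n} : i ∈ inactiveSet n k ↔ k ≤ (i : ℕ) := by
  simp [inactiveSet]

lemma Fk.expect_eq_one (h : Fk n k D ε lam) (hn : n ≠ 0) : 𝔼 i, lam i = 1 := by
  rw [Fintype.expect_eq_sum_div_card, h.2.1, Fintype.card_fin, div_self (Nat.cast_ne_zero.mpr hn)]

lemma Fk.le_twfD (h : Fk n k D ε lam) (hε : ε ∈ Set.Icc 0 D) :
    ∀ i ∈ inactiveSet n k, lam i ≤ twfD lam D := by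
  intro i hi
  have hmargin : 0 ≤ ε * ((D - ε) / (2 * (n : ℝ))) :=
    mul_nonneg hε.1 (div_nonneg (sub_nonneg.mpr hε.2) (by positivity))
  linarith [h.2.2.2 i (mem_inactiveSet.mp hi)]

lemma Fk.averageOn_inactiveSet (h : Fk n k D ε lam) (hD : 0 < D) (hDlam : D < 𝔼 i, lam i)
    (hε : ε ∈ Set.Icc 0 D) : Fk n k D ε (averageOn (inactiveSet n k) lam) := by
  have htwf := twfD_averageOn hD hDlam (h.le_twfD hε)
  obtain ⟨hnonneg, hsum, hactive, hinactive⟩ := h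
  refine ⟨averageOn_nonneg hnonneg, ?_, fun i hi ↦ ?_, fun i hi ↦ ?_⟩
  · rw [← Fintype.card_smul_expect, expect_averageOn, Fintype.card_smul_expect, hsum]
  · rw [htwf, averageOn_of_notMem (mem_inactiveSet.not.mpr hi.not_ge)]
    exact hactive i hi
  · rw [htwf]
    exact averageOn_le_of_mem (mem_inactiveSet.mpr hi)
      fun j hj ↦ hinactive j (mem_inactiveSet.mp hj)

end Feasible

theorem stmt_14_general {n k : ℕ} {D ε : ℝ} (hD : D ∈ Set.Ioo 0 1) (hε : ε ∈ Set.Icc 0 D)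
    {lamStar : Fin n → ℝ} (hmem : Fk n k D ε lamStar)
    (hmax : ∀ lam : Fin n → ℝ, Fk n k D ε lam →
      RRrc lam D - RRwf lam D ≤ RRrc lamStar D - RRwf lamStar D) :
    ∀ i j : Fin n, k ≤ (i : ℕ) → k ≤ (j : ℕ) → lamStar i = lamStar j := by
  intro i j hi hj
  by_contra hne
  have hmean : D < 𝔼 l, lamStar l := hD.2.trans_eq (hmem.expect_eq_one i.pos.ne').symm
  have hfeasible := hmem.averageOn_inactiveSet hD.1 hmean hε
  have hRwf := RRwf_averageOn hmem.1 hD.1 hmean (hmem.le_twfD hε)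
  have hRrc := RRrc_lt_RRrc_averageOn hmem.1 hD.1 hmean
    ⟨i, mem_inactiveSet.mpr hi, j, mem_inactiveSet.mpr hj, hne⟩
  linarith [hmax _ hfeasible]

/-- at a maximizer of `G(λ) = 𝐑_rc(λ, D*) - 𝐑_wf(λ, D*)` over `F_k`,
the inactive-set eigenvalues are all equal. -/
theorem stmt_14 (n : ℕ) (hn : 1 ≤ n) (Dstar ε : ℝ)
    (hD : Dstar ∈ Set.Icc (0.005 : ℝ) 0.995) (hε : ε ∈ Set.Ioo (0 : ℝ) Dstar)
    (k : ℕ) (hk : k ≤ n) (lamStar : Fin n → ℝ)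
    (hmem : Fk n k Dstar ε lamStar)
    (hmax : ∀ lam : Fin n → ℝ, Fk n k Dstar ε lam →
      RRrc lam Dstar - RRwf lam Dstar ≤ RRrc lamStar Dstar - RRwf lamStar Dstar) :
    ∀ i j : Fin n, k ≤ (i : ℕ) → k ≤ (j : ℕ) → lamStar i = lamStar j :=
  stmt_14_general ⟨hε.1.trans hε.2, hD.2.trans_lt (by norm_num)⟩ ⟨hε.1.le, hε.2.le⟩ hmem hmax
end

section
/- Fix a rate R > 0 and let λ ∈ ℝⁿ with λᵢ > 0 for all i. Let T = T_rc(λ, R), so that T is implicitly determined by R_rc(λ, T) = R. Then the map λ ↦ n 𝐃_rc(λ, R) is differentiable at λ and for every j its partial derivative equals 1/(1 + λⱼT)² + ( Σᵢ λᵢ²/(1 + λᵢT)² ) · ( T/(1 + λⱼT) ) / ( Σᵢ λᵢ/(1 + λᵢT) ), and this value lies in the interval [0, 2]. -/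
open Real

/-- `T_rc(λ, R)`: the unique `T > 0` with `R_rc(λ, T) = R`. -/
noncomputable def Trc {n : ℕ} (lam : Fin n → ℝ) (R : ℝ) : ℝ :=
  Classical.epsilon fun T => 0 < T ∧ Rrc lam T = R

/-- `𝐃_rc(λ, R) = D_rc(λ, T_rc(λ, R))`. -/
noncomputable def DDrc {n : ℕ} (lam : Fin n → ℝ) (R : ℝ) : ℝ :=
  Drc lam (Trc lam R)

/-!
Write `G(λ, T) = Σᵢ log (1 + λᵢT)` for the rate in nats and `D(λ, T) = Σᵢ λᵢ/(1 + λᵢT)` for the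
total distortion. Since `∂G/∂T = D > 0`, the implicit function theorem makes the `T` with prescribed
rate a differentiable function of `λ`, with `∂T/∂λⱼ = -(T/(1 + λⱼT))/D`. Strict monotonicity of `G`
in `T` identifies it with `T_rc` near `λ`, and the chain rule, with `∂D/∂T = -Σᵢ λᵢ²/(1 + λᵢT)²`,
gives the partial derivatives. Both of their terms are at most `1`: the second because
`λᵢT/(1 + λᵢT) ≤ 1` implies `T Σᵢ λᵢ²/(1 + λᵢT)² ≤ D`.
-/

open Filter Set Topology

section ImplicitFunction

variable {𝕜 E₁ E₂ F : Type*} [NontriviallyNormedField 𝕜]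
  [NormedAddCommGroup E₁] [NormedSpace 𝕜 E₁] [CompleteSpace E₁]
  [NormedAddCommGroup E₂] [NormedSpace 𝕜 E₂] [CompleteSpace E₂]
  [NormedAddCommGroup F] [NormedSpace 𝕜 F] [CompleteSpace F]

theorem hasStrictFDerivAt_of_eventually_levelSet_subset_graph {f : E₁ × E₂ → F}
    {f₁ : E₁ →L[𝕜] F} {f₂ : E₂ ≃L[𝕜] F} {u : E₁ × E₂} {g : E₁ → E₂}
    (hf : HasStrictFDerivAt f (f₁.coprod (f₂ : E₂ →L[𝕜] F)) u)
    (hg : ∀ᶠ p in 𝓝 u, f p = f u → p.2 = g p.1) :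
    HasStrictFDerivAt g (-(f₂.symm : F →L[𝕜] E₂) ∘L f₁) u.1 := by
  have hinv : (f₁.coprod (f₂ : E₂ →L[𝕜] F) ∘L .inr 𝕜 E₁ E₂).IsInvertible :=
    ⟨f₂, (ContinuousLinearMap.coprod_comp_inr _ _).symm⟩
  set ψ := hf.implicitFunctionOfProdDomain hinv
  have hψ : HasStrictFDerivAt ψ (-(f₂.symm : F →L[𝕜] E₂) ∘L f₁) u.1 := by
    simpa only [ContinuousLinearMap.coprod_comp_inl, ContinuousLinearMap.coprod_comp_inr,
      ContinuousLinearMap.inverse_equiv]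
      using hf.hasStrictFDerivAt_implicitFunctionOfProdDomain hinv
  have hgraph : Tendsto (fun x => (x, ψ x)) (𝓝 u.1) (𝓝 u) :=
    tendsto_id.prodMk_nhds (hf.tendsto_implicitFunctionOfProdDomain hinv)
  refine hψ.congr_of_eventuallyEq ?_
  filter_upwards [hgraph.eventually hg, hf.eventually_apply_implicitFunctionOfProdDomain hinv]
    with x hunique hlevel
  exact hunique hlevel

end ImplicitFunction

section RateDistortion

variable {ι : Type*} {l : ι → ℝ} {T : ℝ}

theorem one_le_one_add_mul (hl : 0 ≤ l) (hT : 0 ≤ T) (i : ι) : 1 ≤ 1 + l i * T :=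
  le_add_of_nonneg_right (mul_nonneg (hl i) hT)

theorem one_add_mul_pos (hl : 0 ≤ l) (hT : 0 ≤ T) (i : ι) : 0 < 1 + l i * T :=
  zero_lt_one.trans_le (one_le_one_add_mul hl hT i)

theorem hasStrictFDerivAt_apply_fst (l : ι → ℝ) (T : ℝ) (i : ι) :
    HasStrictFDerivAt (fun p : (ι → ℝ) × ℝ => p.1 i)
      ((ContinuousLinearMap.proj i : (ι → ℝ) →L[ℝ] ℝ) ∘L .fst ℝ (ι → ℝ) ℝ) (l, T) :=
  ((ContinuousLinearMap.proj i : (ι → ℝ) →L[ℝ] ℝ) ∘L .fst ℝ (ι → ℝ) ℝ).hasStrictFDerivAt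

section Summands

variable [Finite ι]

theorem hasStrictFDerivAt_one_add_apply_mul (l : ι → ℝ) (T : ℝ) (i : ι) :
    HasStrictFDerivAt (fun p : (ι → ℝ) × ℝ => 1 + p.1 i * p.2)
      ((T • (ContinuousLinearMap.proj i : (ι → ℝ) →L[ℝ] ℝ)).coprod
        (l i • ContinuousLinearMap.id ℝ ℝ)) (l, T) := by
  have := Fintype.ofFinite ι
  refine (((hasStrictFDerivAt_apply_fst l T i).mul hasStrictFDerivAt_snd).const_add
    1).congr_fderiv ?_
  ext <;> simp

theorem hasStrictFDerivAt_apply_div_one_add_apply_mul {i : ι} (h : 1 + l i * T ≠ 0) :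
    HasStrictFDerivAt (fun p : (ι → ℝ) × ℝ => p.1 i / (1 + p.1 i * p.2))
      (((1 / (1 + l i * T) ^ 2) • (ContinuousLinearMap.proj i : (ι → ℝ) →L[ℝ] ℝ)).coprod
        (-(l i ^ 2 / (1 + l i * T) ^ 2) • ContinuousLinearMap.id ℝ ℝ)) (l, T) := by
  have := Fintype.ofFinite ι
  have hinv := (hasStrictDerivAt_inv h).comp_hasStrictFDerivAt (l, T)
    (hasStrictFDerivAt_one_add_apply_mul l T i)
  simp only [div_eq_mul_inv]
  refine ((hasStrictFDerivAt_apply_fst l T i).mul hinv).congr_fderiv ?_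
  refine ContinuousLinearMap.ext fun ⟨v, s⟩ => ?_
  simp only [Function.comp_apply, ContinuousLinearMap.comp_apply, ContinuousLinearMap.coprod_apply,
    ContinuousLinearMap.coe_fst', ContinuousLinearMap.proj_apply, ContinuousLinearMap.id_apply,
    add_apply, smul_apply, smul_eq_mul]
  field_simp
  ring

end Summands

variable [Fintype ι]

/-- The rate `2n R_rc(l, T)` measured in nats instead of bits, for an arbitrary index set. -/
noncomputable def logRate (l : ι → ℝ) (T : ℝ) : ℝ := ∑ i, log (1 + l i * T)

/-- The unnormalised distortion `n D_rc(l, T)`, for an arbitrary index set. -/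
noncomputable def totalDistortion (l : ι → ℝ) (T : ℝ) : ℝ := ∑ i, l i / (1 + l i * T)

/-- The `j`-th partial derivative of the total distortion at constant rate, as a function of `l`
and of the parameter `T` at which that rate is attained. -/
noncomputable def distortionPartial (l : ι → ℝ) (T : ℝ) (j : ι) : ℝ :=
  1 / (1 + l j * T) ^ 2
    + (∑ i, l i ^ 2 / (1 + l i * T) ^ 2) * (T / (1 + l j * T)) / totalDistortion l T

theorem totalDistortion_nonneg (hl : 0 ≤ l) (hT : 0 ≤ T) : 0 ≤ totalDistortion l T :=
  Finset.sum_nonneg fun i _ => div_nonneg (hl i) (one_add_mul_pos hl hT i).le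

theorem totalDistortion_pos (hl : 0 < l) (hT : 0 ≤ T) : 0 < totalDistortion l T := by
  obtain ⟨hl, i, hi⟩ := Pi.lt_def.1 hl
  exact Finset.sum_pos' (fun k _ => div_nonneg (hl k) (one_add_mul_pos hl hT k).le)
    ⟨i, Finset.mem_univ i, div_pos hi (one_add_mul_pos hl hT i)⟩

theorem sum_sq_div_mul_le_totalDistortion (hl : 0 ≤ l) (hT : 0 ≤ T) :
    (∑ i, l i ^ 2 / (1 + l i * T) ^ 2) * T ≤ totalDistortion l T := by
  rw [Finset.sum_mul]
  refine Finset.sum_le_sum fun i _ => ?_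
  have hpos := one_add_mul_pos hl hT i
  calc l i ^ 2 / (1 + l i * T) ^ 2 * T
      = l i / (1 + l i * T) * (l i * T / (1 + l i * T)) := by field_simp
    _ ≤ l i / (1 + l i * T) :=
        mul_le_of_le_one_right (div_nonneg (hl i) hpos.le)
          ((div_le_one hpos).2 (le_add_of_nonneg_left zero_le_one))

theorem distortionPartial_mem_Icc (hl : 0 ≤ l) (hT : 0 ≤ T) (j : ι) :
    distortionPartial l T j ∈ Icc 0 2 := by
  have hone := one_le_one_add_mul hl hT j
  have hdist := totalDistortion_nonneg hl hT
  have hdirect : 1 / (1 + l j * T) ^ 2 ≤ 1 :=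
    div_le_one_of_le₀ (one_le_pow₀ hone) (sq_nonneg _)
  have hindirect :
      (∑ i, l i ^ 2 / (1 + l i * T) ^ 2) * (T / (1 + l j * T)) / totalDistortion l T ≤ 1 := by
    refine div_le_one_of_le₀ ?_ hdist
    calc (∑ i, l i ^ 2 / (1 + l i * T) ^ 2) * (T / (1 + l j * T))
        ≤ (∑ i, l i ^ 2 / (1 + l i * T) ^ 2) * T := by gcongr; exact div_le_self hT hone
      _ ≤ totalDistortion l T := sum_sq_div_mul_le_totalDistortion hl hT
  refine ⟨?_, ?_⟩
  · unfold distortionPartial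
    positivity
  · calc distortionPartial l T j ≤ 1 + 1 := add_le_add hdirect hindirect
      _ = 2 := one_add_one_eq_two

theorem logRate_zero_right (l : ι → ℝ) : logRate l 0 = 0 := by
  simp [logRate]

theorem strictMonoOn_logRate (hl : 0 < l) : StrictMonoOn (logRate l) (Ici 0) := by
  obtain ⟨hl, i, hi⟩ := Pi.lt_def.1 hl
  intro s hs t _ hst
  refine Finset.sum_lt_sum (fun k _ => ?_) ⟨i, Finset.mem_univ i, ?_⟩
  · have hk := hl k
    exact log_le_log (one_add_mul_pos hl hs k) (by gcongr)
  · exact log_lt_log (one_add_mul_pos hl hs i) (by gcongr)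

theorem continuousOn_logRate (hl : 0 ≤ l) : ContinuousOn (logRate l) (Ici 0) :=
  continuousOn_finsetSum _ fun i _ =>
    ContinuousOn.log (by fun_prop) fun _ hT => (one_add_mul_pos hl hT i).ne'

theorem tendsto_logRate_atTop (hl : 0 < l) : Tendsto (logRate l) atTop atTop := by
  obtain ⟨hl, i, hi⟩ := Pi.lt_def.1 hl
  have hterm : Tendsto (fun T => log (1 + l i * T)) atTop atTop :=
    tendsto_log_atTop.comp (tendsto_atTop_add_const_left _ _ (tendsto_id.const_mul_atTop hi))
  refine tendsto_atTop_mono' _ ?_ hterm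
  filter_upwards [eventually_ge_atTop 0] with T hT
  exact Finset.single_le_sum (f := fun k => log (1 + l k * T))
    (fun k _ => log_nonneg (one_le_one_add_mul hl hT k)) (Finset.mem_univ i)

theorem exists_pos_logRate_eq (hl : 0 < l) {C : ℝ} (hC : 0 < C) :
    ∃ T, 0 < T ∧ logRate l T = C := by
  obtain ⟨T, hT, rfl⟩ := isPreconnected_Ici.intermediate_value_Ici self_mem_Ici
    (le_principal_iff.2 (Ici_mem_atTop 0)) (continuousOn_logRate hl.le)
    (tendsto_logRate_atTop hl) ((logRate_zero_right l).trans_le hC.le)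
  refine ⟨T, (mem_Ici.1 hT).lt_of_ne ?_, rfl⟩
  rintro rfl
  exact hC.ne' (logRate_zero_right l)

theorem hasStrictFDerivAt_logRate (h : ∀ i, 1 + l i * T ≠ 0) :
    HasStrictFDerivAt (fun p : (ι → ℝ) × ℝ => logRate p.1 p.2)
      ((∑ i, (T / (1 + l i * T)) • (ContinuousLinearMap.proj i : (ι → ℝ) →L[ℝ] ℝ)).coprod
        (totalDistortion l T • ContinuousLinearMap.id ℝ ℝ)) (l, T) := by
  unfold logRate
  refine (HasStrictFDerivAt.fun_sum fun i _ =>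
    (hasStrictFDerivAt_one_add_apply_mul l T i).log (h i)).congr_fderiv ?_
  ext <;> simp [totalDistortion, div_eq_inv_mul, mul_assoc]

theorem hasStrictFDerivAt_totalDistortion (h : ∀ i, 1 + l i * T ≠ 0) :
    HasStrictFDerivAt (fun p : (ι → ℝ) × ℝ => totalDistortion p.1 p.2)
      ((∑ i, (1 / (1 + l i * T) ^ 2) • (ContinuousLinearMap.proj i : (ι → ℝ) →L[ℝ] ℝ)).coprod
        (-(∑ i, l i ^ 2 / (1 + l i * T) ^ 2) • ContinuousLinearMap.id ℝ ℝ)) (l, T) := by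
  unfold totalDistortion
  refine (HasStrictFDerivAt.fun_sum fun i _ =>
    hasStrictFDerivAt_apply_div_one_add_apply_mul (h i)).congr_fderiv ?_
  ext <;> simp

theorem hasStrictFDerivAt_parameter_of_logRate_eq (h : ∀ i, 1 + l i * T ≠ 0)
    (hD : totalDistortion l T ≠ 0) {τ : (ι → ℝ) → ℝ}
    (hτ : ∀ᶠ p in 𝓝 (l, T), logRate p.1 p.2 = logRate l T → p.2 = τ p.1) :
    HasStrictFDerivAt τ (-(totalDistortion l T)⁻¹ •
      ∑ i, (T / (1 + l i * T)) • (ContinuousLinearMap.proj i : (ι → ℝ) →L[ℝ] ℝ)) l := by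
  let dT : ℝ ≃L[ℝ] ℝ := ContinuousLinearEquiv.unitsEquivAut ℝ (Units.mk0 _ hD)
  have hdT : (dT : ℝ →L[ℝ] ℝ) = totalDistortion l T • ContinuousLinearMap.id ℝ ℝ := by
    ext
    simp [dT]
  have hrate := hasStrictFDerivAt_logRate h
  rw [← hdT] at hrate
  refine (hasStrictFDerivAt_of_eventually_levelSet_subset_graph hrate hτ).congr_fderiv ?_
  ext
  simp [dT, mul_comm, Finset.mul_sum]

theorem hasStrictFDerivAt_totalDistortion_of_logRate_eq (h : ∀ i, 1 + l i * T ≠ 0)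
    (hD : totalDistortion l T ≠ 0) {τ : (ι → ℝ) → ℝ}
    (hτ : ∀ᶠ p in 𝓝 (l, T), logRate p.1 p.2 = logRate l T → p.2 = τ p.1) :
    HasStrictFDerivAt (fun l' => totalDistortion l' (τ l'))
      (∑ j, distortionPartial l T j • (ContinuousLinearMap.proj j : (ι → ℝ) →L[ℝ] ℝ)) l := by
  have hdist := hasStrictFDerivAt_totalDistortion h
  have hgraph := (hasStrictFDerivAt_id l).prodMk
    (hasStrictFDerivAt_parameter_of_logRate_eq h hD hτ)
  obtain rfl : T = τ l := hτ.self_of_nhds rfl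
  refine (HasStrictFDerivAt.comp (g := fun p : (ι → ℝ) × ℝ => totalDistortion p.1 p.2) l
    hdist hgraph).congr_fderiv ?_
  ext v
  simp only [ContinuousLinearMap.comp_apply, ContinuousLinearMap.prod_apply,
    ContinuousLinearMap.coprod_apply, ContinuousLinearMap.id_apply, ContinuousLinearMap.proj_apply,
    sum_apply, smul_apply, smul_eq_mul, neg_mul, mul_neg, neg_neg, distortionPartial, add_mul,
    Finset.sum_add_distrib]
  congr 1
  rw [Finset.mul_sum, Finset.mul_sum]
  exact Finset.sum_congr rfl fun i _ => by ring

end RateDistortion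

section RandomCoding

variable {n : ℕ} {l : Fin n → ℝ} {R T : ℝ}

theorem natCast_mul_Drc (l : Fin n → ℝ) (T : ℝ) : n * Drc l T = totalDistortion l T := by
  rcases eq_or_ne n 0 with rfl | hn
  · simp [totalDistortion]
  · rw [Drc, totalDistortion, ← mul_assoc, mul_one_div_cancel (Nat.cast_ne_zero.2 hn), one_mul]

theorem Rrc_eq_iff_logRate_eq (hn : n ≠ 0) : Rrc l T = R ↔ logRate l T = 2 * n * log 2 * R := by
  have hscale : (2 * n * log 2 : ℝ) ≠ 0 := by positivity
  have hbits : Rrc l T = logRate l T / (2 * n * log 2) := by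
    simp only [Rrc, logRate, logb, ← Finset.sum_div]
    ring
  rw [hbits, div_eq_iff hscale, mul_comm R]

theorem Trc_spec_of_exists (h : ∃ T, 0 < T ∧ Rrc l T = R) : 0 < Trc l R ∧ Rrc l (Trc l R) = R :=
  Classical.epsilon_spec h

theorem Trc_spec (hl : 0 < l) (hR : 0 < R) : 0 < Trc l R ∧ Rrc l (Trc l R) = R := by
  have hn : n ≠ 0 := (Pi.lt_def.1 hl).2.elim fun i _ => i.pos.ne'
  obtain ⟨T, hT, hrate⟩ := exists_pos_logRate_eq hl (C := 2 * n * log 2 * R) (by positivity)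
  exact Trc_spec_of_exists ⟨T, hT, (Rrc_eq_iff_logRate_eq hn).2 hrate⟩

theorem eq_Trc (hl : 0 < l) (hT : 0 < T) (h : Rrc l T = R) : T = Trc l R := by
  have hn : n ≠ 0 := (Pi.lt_def.1 hl).2.elim fun i _ => i.pos.ne'
  obtain ⟨hpos, hrate⟩ := Trc_spec_of_exists ⟨T, hT, h⟩
  exact (strictMonoOn_logRate hl).injOn hT.le hpos.le
    (((Rrc_eq_iff_logRate_eq hn).1 h).trans ((Rrc_eq_iff_logRate_eq hn).1 hrate).symm)

theorem eventually_eq_Trc_of_logRate_eq [NeZero n] (hl : ∀ i, 0 < l i) (hR : 0 < R) :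
    ∀ᶠ p in 𝓝 (l, Trc l R), logRate p.1 p.2 = logRate l (Trc l R) → p.2 = Trc p.1 R := by
  obtain ⟨hT, hrate⟩ := Trc_spec (lt_of_strongLT hl) hR
  have hpos : ∀ᶠ l' in 𝓝 l, ∀ i, 0 < l' i :=
    eventually_all.2 fun i => (continuous_apply i).continuousAt.eventually_const_lt (hl i)
  filter_upwards [hpos.prod_nhds (eventually_gt_nhds hT)] with p ⟨hlp, hTp⟩ hlevel
  have hn := NeZero.ne n
  exact eq_Trc (lt_of_strongLT hlp) hTp
    ((Rrc_eq_iff_logRate_eq hn).2 (hlevel.trans ((Rrc_eq_iff_logRate_eq hn).1 hrate)))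

theorem hasStrictFDerivAt_mul_DDrc [NeZero n] (hl : ∀ i, 0 < l i) (hR : 0 < R) :
    HasStrictFDerivAt (fun l' : Fin n → ℝ => n * DDrc l' R)
      (∑ j, distortionPartial l (Trc l R) j •
        (ContinuousLinearMap.proj j : (Fin n → ℝ) →L[ℝ] ℝ)) l := by
  have hlpos : 0 < l := lt_of_strongLT hl
  have hT := (Trc_spec hlpos hR).1.le
  simp only [DDrc, natCast_mul_Drc]
  exact hasStrictFDerivAt_totalDistortion_of_logRate_eq
    (fun i => (one_add_mul_pos hlpos.le hT i).ne') (totalDistortion_pos hlpos hT).ne'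
    (eventually_eq_Trc_of_logRate_eq hl hR)

end RandomCoding

/-- differentiability of `λ ↦ n 𝐃_rc(λ, R)` with explicit partial
derivatives, each lying in `[0, 2]`.  Writing `T = T_rc(λ, R)`, the `j`-th partial
derivative is `1/(1+λⱼT)² + (Σᵢ λᵢ²/(1+λᵢT)²) (T/(1+λⱼT)) / (Σᵢ λᵢ/(1+λᵢT))`. -/
theorem stmt_19 (n : ℕ) (R : ℝ) (hR : 0 < R)
    (lam : Fin n → ℝ) (hlam : ∀ i, 0 < lam i) :
    HasFDerivAt (fun l : Fin n → ℝ => (n : ℝ) * DDrc l R)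
      (∑ j, (1 / (1 + lam j * Trc lam R) ^ 2
            + (∑ i, (lam i) ^ 2 / (1 + lam i * Trc lam R) ^ 2)
              * (Trc lam R / (1 + lam j * Trc lam R))
              / (∑ i, lam i / (1 + lam i * Trc lam R)))
          • (ContinuousLinearMap.proj j : (Fin n → ℝ) →L[ℝ] ℝ)) lam
    ∧ ∀ j : Fin n,
        (1 / (1 + lam j * Trc lam R) ^ 2
          + (∑ i, (lam i) ^ 2 / (1 + lam i * Trc lam R) ^ 2)
            * (Trc lam R / (1 + lam j * Trc lam R))
            / (∑ i, lam i / (1 + lam i * Trc lam R))) ∈ Set.Icc (0 : ℝ) 2 := by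
  rcases eq_or_ne n 0 with rfl | hn
  · exact ⟨(hasFDerivAt_of_subsingleton _ _).congr_fderiv (Subsingleton.elim _ _),
      fun j => j.elim0⟩
  · have : NeZero n := ⟨hn⟩
    have hlam_pos : 0 < lam := lt_of_strongLT hlam
    exact ⟨(hasStrictFDerivAt_mul_DDrc hlam hR).hasFDerivAt,
      distortionPartial_mem_Icc hlam_pos.le (Trc_spec hlam_pos hR).1.le⟩
end
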